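/- Let 2 < q < 2* and set Ω_L = (-L/2, L/2)^{N-1} × (0,1). Then λ_{2,q}(Ω_L) is non-increasing in L and lim_{L→+∞} λ_{2,q}(Ω_L) = λ_{2,q}(ℝ^{N-1} × (0,1)) > 0. Consequently, the infimum over open bounded convex sets Ω of R_Ω² λ_{2,q}(Ω) |Ω|^{(2-q)/q} equals 0, i.e. no Hersch–Protter-type lower bound of the form λ_{2,q}(Ω)|Ω|^{(2-q)/q} ≥ c/R_Ω² can hold when 2 < q < 2*. -/

import Mathlib

/-!
Extension by zero makes `λ_{2,q}` decreasing under inclusion of open sets, and every test function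
on the infinite slab lives in `Ω_L` for large `L`. Monotonicity and the limit follow.

Positivity on the slab combines three facts, for `D = ∫ |∇φ|²`. The slab is bounded in one direction,
so `∫ φ² ≤ 4 D` (`poincare_slab`). Some exponent `r ≥ q` satisfies `∫ |φ| ^ r ≤ B D ^ (r / 2)`
(`higher_power`): for `N ≥ 3` this is the Sobolev inequality with the critical exponent, and for
`N = 2` it follows by iterating the `W^{1,1}` Sobolev inequality on powers of `φ`
(`planar_ladder`). Finally `t ^ q ≤ t ^ 2 + t ^ r` for `t ≥ 0`, applied to `t = |φ| / √D`, bounds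
`∫ |φ| ^ q` by a multiple of `D ^ (q / 2)` (`sobolev_slab`).

For the last claim, the boxes `Ω_L` with `L ≥ 1` have inradius at most `1`, satisfy
`λ_{2,q}(Ω_L) ≤ λ_{2,q}(Ω_1)`, and have volume at least `L`; as `(2 - q) / q < 0`, the scale-invariant
product tends to `0`.
-/

open MeasureTheory Filter

/-- The Poincaré–Sobolev constant `λ_{2,q}(Ω)` (the set `Ω` may be unbounded). -/
noncomputable def lambda2q (N : ℕ) (q : ℝ) (Ω : Set (EuclideanSpace ℝ (Fin N))) : ℝ :=
  sInf { c : ℝ | ∃ φ : EuclideanSpace ℝ (Fin N) → ℝ, ContDiff ℝ (⊤ : ℕ∞) φ ∧ HasCompactSupport φ ∧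
    tsupport φ ⊆ Ω ∧ φ ≠ 0 ∧
    c = (∫ x in Ω, ‖fderiv ℝ φ x‖ ^ 2) / (∫ x in Ω, |φ x| ^ q) ^ (2 / q) }

/-- The inradius of a set: the radius of the largest open ball contained in it. -/
noncomputable def inradius {N : ℕ} (Ω : Set (EuclideanSpace ℝ (Fin N))) : ℝ :=
  sSup {r : ℝ | ∃ x : EuclideanSpace ℝ (Fin N), Metric.ball x r ⊆ Ω}

/-- The slab-type box `Ω_L = (-L/2, L/2)^{N-1} × (0,1) ⊂ ℝ^N`. -/
def slab (N : ℕ) (hN : 0 < N) (L : ℝ) : Set (EuclideanSpace ℝ (Fin N)) :=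
  {x | (∀ i : Fin N, (i : ℕ) < N - 1 → |x i| < L / 2) ∧
       0 < x ⟨N - 1, Nat.sub_lt hN one_pos⟩ ∧ x ⟨N - 1, Nat.sub_lt hN one_pos⟩ < 1}

/-- The infinite slab `ℝ^{N-1} × (0,1) ⊂ ℝ^N`. -/
def slabInf (N : ℕ) (hN : 0 < N) : Set (EuclideanSpace ℝ (Fin N)) :=
  {x | 0 < x ⟨N - 1, Nat.sub_lt hN one_pos⟩ ∧ x ⟨N - 1, Nat.sub_lt hN one_pos⟩ < 1}

open scoped NNReal ENNReal

/-! ### Sobolev and Poincaré inequalities -/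

/-- The Gagliardo–Nirenberg–Sobolev inequality with real-valued integrals in place of `eLpNorm`. -/
lemma sobolev_real {N : ℕ} (hN : 0 < N) {p p' : ℝ≥0} (hp : 1 ≤ p) (hp0 : p' ≠ 0)
    (hp' : (p' : ℝ)⁻¹ = (p : ℝ)⁻¹ - (N : ℝ)⁻¹) :
    ∃ C : ℝ, 0 ≤ C ∧ ∀ u : EuclideanSpace ℝ (Fin N) → ℝ, ContDiff ℝ 1 u → HasCompactSupport u →
      (∫ x, |u x| ^ (p' : ℝ)) ^ (p' : ℝ)⁻¹ ≤ C * (∫ x, ‖fderiv ℝ u x‖ ^ (p : ℝ)) ^ (p : ℝ)⁻¹ := by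
  refine ⟨SNormLESNormFDerivOfEqConst ℝ (volume : Measure (EuclideanSpace ℝ (Fin N))) p,
    NNReal.coe_nonneg _, fun u hu hc => ?_⟩
  have hpne : p ≠ 0 := (zero_lt_one.trans_le hp).ne'
  have h := eLpNorm_le_eLpNorm_fderiv_of_eq (volume : Measure (EuclideanSpace ℝ (Fin N)))
    hu hc hp (by simpa using hN) (by simpa using hp')
  have hm1 : MemLp u p' volume := hu.continuous.memLp_of_hasCompactSupport hc
  have hm2 : MemLp (fderiv ℝ u) p volume :=
    (hu.continuous_fderiv one_ne_zero).memLp_of_hasCompactSupport (hc.fderiv (𝕜 := ℝ))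
  rw [hm1.eLpNorm_eq_integral_rpow_norm (by simpa using hp0) (by simp),
    hm2.eLpNorm_eq_integral_rpow_norm (by simpa using hpne) (by simp),
    ← ENNReal.ofReal_coe_nnreal (p := SNormLESNormFDerivOfEqConst ℝ _ _), ← ENNReal.ofReal_mul (NNReal.coe_nonneg _)] at h
  have h2 := (ENNReal.ofReal_le_ofReal_iff (by positivity)).1 h
  simpa using h2

/-- Cauchy–Schwarz for nonnegative continuous functions of compact support. -/
lemma integral_mul_sq_le {N : ℕ} {a b : EuclideanSpace ℝ (Fin N) → ℝ}
    (ha : Continuous a) (hac : HasCompactSupport a) (hb : Continuous b) (hbc : HasCompactSupport b)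
    (ha0 : 0 ≤ a) (hb0 : 0 ≤ b) :
    (∫ x, a x * b x) ^ 2 ≤ (∫ x, a x ^ 2) * ∫ x, b x ^ 2 := by
  have h := integral_mul_le_Lp_mul_Lq_of_nonneg (μ := (volume : Measure (EuclideanSpace ℝ (Fin N))))
    (Real.HolderConjugate.two_two) (ae_of_all _ ha0) (ae_of_all _ hb0)
    (ha.memLp_of_hasCompactSupport hac) (hb.memLp_of_hasCompactSupport hbc)
  simp only [Real.rpow_two, ← Real.sqrt_eq_rpow] at h
  have h0 : 0 ≤ ∫ x, a x * b x := integral_nonneg fun x => mul_nonneg (ha0 x) (hb0 x)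
  have hA : 0 ≤ ∫ x, a x ^ 2 := integral_nonneg fun x => sq_nonneg _
  have hB : 0 ≤ ∫ x, b x ^ 2 := integral_nonneg fun x => sq_nonneg _
  calc _ ≤ _ := pow_le_pow_left₀ h0 h 2
    _ = _ := by rw [mul_pow, Real.sq_sqrt hA, Real.sq_sqrt hB]

/-- Poincaré inequality on the infinite slab. With `t` the last coordinate, integration by parts
gives `∫ φ² = -2 ∫ t φ ∂ₜφ`; since `|t| ≤ 1` on the support, Young's inequality allows half of
`∫ φ²` to be absorbed. -/
lemma poincare_slab {N : ℕ} (hN : 0 < N) {φ : EuclideanSpace ℝ (Fin N) → ℝ}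
    (hφ : ContDiff ℝ 1 φ) (hc : HasCompactSupport φ) (hs : tsupport φ ⊆ slabInf N hN) :
    ∫ x, φ x ^ 2 ≤ 4 * ∫ x, ‖fderiv ℝ φ x‖ ^ 2 := by
  set j : Fin N := ⟨N - 1, Nat.sub_lt hN one_pos⟩ with hj
  set v : EuclideanSpace ℝ (Fin N) := EuclideanSpace.single j 1 with hv
  have hvn : ‖v‖ = 1 := by simp [hv]
  set ℓ : EuclideanSpace ℝ (Fin N) →L[ℝ] ℝ := EuclideanSpace.proj j with hl
  have hlv : ℓ v = 1 := by simp [hl, hv]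
  have hdφ : Continuous (fderiv ℝ φ) := hφ.continuous_fderiv one_ne_zero
  have hdv : Continuous fun x => fderiv ℝ φ x v := hdφ.clm_apply continuous_const
  have hD : Differentiable ℝ φ := hφ.differentiable one_ne_zero
  have hsq : ∀ x, fderiv ℝ (fun y => φ y ^ 2) x v = 2 * φ x * fderiv ℝ φ x v := by
    intro x
    rw [((hD x).hasFDerivAt.pow 2).fderiv]
    simp
  have hc2 : HasCompactSupport fun x => φ x ^ 2 := hc.comp_left (g := fun t : ℝ => t ^ 2) (by simp)
  have hcd : HasCompactSupport (fderiv ℝ φ) := hc.fderiv (𝕜 := ℝ)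
  have hcn : HasCompactSupport fun x => ‖fderiv ℝ φ x‖ ^ 2 :=
    hcd.comp_left (g := fun t => ‖t‖ ^ 2) (by simp)
  have i2 : Integrable fun x => φ x ^ 2 :=
    (hφ.continuous.pow 2).integrable_of_hasCompactSupport hc2
  have in2 : Integrable fun x => ‖fderiv ℝ φ x‖ ^ 2 :=
    (hdφ.norm.pow 2).integrable_of_hasCompactSupport hcn
  have cg : Continuous fun x => ℓ x * (2 * φ x * fderiv ℝ φ x v) := by
    have := hφ.continuous
    fun_prop
  have ig : Integrable fun x => ℓ x * (2 * φ x * fderiv ℝ φ x v) := by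
    refine cg.integrable_of_hasCompactSupport (hc.mono' ?_)
    intro x hx
    apply subset_tsupport
    simp only [Function.mem_support] at hx ⊢
    intro h
    simp [h] at hx
  have key := integral_mul_fderiv_eq_neg_fderiv_mul_of_integrable (𝕜 := ℝ)
    (μ := (volume : Measure (EuclideanSpace ℝ (Fin N)))) (f := fun x => ℓ x)
    (g := fun x => φ x ^ 2) (v := v) (by simpa [hlv] using i2) (by simpa only [hsq] using ig)
    ((ℓ.continuous.mul (hφ.continuous.pow 2)).integrable_of_hasCompactSupport hc2.mul_left)
    (fun x _ => ℓ.differentiableAt) (fun x _ => (hD x).pow 2)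
  simp only [hsq, ContinuousLinearMap.fderiv, hlv, one_mul] at key
  have hpt : ∀ x, -(ℓ x * (2 * φ x * fderiv ℝ φ x v)) ≤
      (1 / 2) * φ x ^ 2 + 2 * ‖fderiv ℝ φ x‖ ^ 2 := by
    intro x
    by_cases hx : φ x = 0
    · simp [hx]
    have hxs := hs (subset_tsupport _ hx)
    have h1 : |ℓ x| ≤ 1 := by
      have h3 : ℓ x = x j := rfl
      rw [h3, abs_le]
      have := hxs.1
      have := hxs.2
      constructor <;> linarith
    have h2 : |fderiv ℝ φ x v| ≤ ‖fderiv ℝ φ x‖ := by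
      simpa [hvn] using (fderiv ℝ φ x).le_opNorm v
    calc -(ℓ x * (2 * φ x * fderiv ℝ φ x v)) ≤ |ℓ x * (2 * φ x * fderiv ℝ φ x v)| := neg_le_abs _
      _ = |ℓ x| * (2 * |φ x| * |fderiv ℝ φ x v|) := by simp [abs_mul]
      _ ≤ 1 * (2 * |φ x| * ‖fderiv ℝ φ x‖) := by gcongr
      _ ≤ _ := by
        rw [← sq_abs (φ x)]
        nlinarith [sq_nonneg (|φ x| - 2 * ‖fderiv ℝ φ x‖)]
  have := integral_mono ig.neg ((i2.const_mul (1/2)).add (in2.const_mul 2)) hpt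
  simp only [Pi.neg_apply, Pi.add_apply] at this
  rw [integral_neg, integral_add (i2.const_mul (1/2)) (in2.const_mul 2), integral_const_mul,
    integral_const_mul, key] at this
  linarith

/-- In the plane, where the critical exponent is infinite, all even powers are controlled.
Applying the Sobolev inequality `‖u‖₂ ≤ C ‖∇u‖₁` to `u = φ ^ (k + 2)` and then Cauchy–Schwarz raises
the exponent from `2 (k + 1)` to `2 (k + 2)`; the Poincaré inequality starts the induction. -/
lemma planar_ladder {N : ℕ} (hN : N = 2) (h0 : 0 < N) (k : ℕ) :
    ∃ B : ℝ, 0 ≤ B ∧ ∀ φ : EuclideanSpace ℝ (Fin N) → ℝ, ContDiff ℝ 1 φ → HasCompactSupport φ →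
      tsupport φ ⊆ slabInf N h0 →
      ∫ x, (φ x ^ (k + 1)) ^ 2 ≤ B * (∫ x, ‖fderiv ℝ φ x‖ ^ 2) ^ (k + 1) := by
  induction k with
  | zero => exact ⟨4, by norm_num, fun φ h1 h2 h3 => by simpa using poincare_slab h0 h1 h2 h3⟩
  | succ k ih =>
    obtain ⟨B, hB, ih⟩ := ih
    obtain ⟨C, hC, hS⟩ := sobolev_real (N := N) h0 (p := 1) (p' := 2) le_rfl two_ne_zero
      (by subst hN; norm_num)
    refine ⟨C ^ 2 * (k + 2) ^ 2 * B, by positivity, fun φ h1 h2 h3 => ?_⟩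
    have hD : Differentiable ℝ φ := h1.differentiable one_ne_zero
    have hdφ : Continuous (fderiv ℝ φ) := h1.continuous_fderiv one_ne_zero
    have hcp : HasCompactSupport fun x => φ x ^ (k + 2) :=
      h2.comp_left (g := fun t : ℝ => t ^ (k + 2)) (by simp)
    have hcp1 : HasCompactSupport fun x => |φ x| ^ (k + 1) :=
      h2.comp_left (g := fun t : ℝ => |t| ^ (k + 1)) (by simp)
    have hcd : HasCompactSupport fun x => ‖fderiv ℝ φ x‖ :=
      (h2.fderiv (𝕜 := ℝ)).comp_left (g := fun t => ‖t‖) (by simp)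
    have h := hS (fun x => φ x ^ (k + 2)) (h1.pow _) hcp
    have hfd : ∀ x, ‖fderiv ℝ (fun y => φ y ^ (k + 2)) x‖ =
        (k + 2) * (|φ x| ^ (k + 1) * ‖fderiv ℝ φ x‖) := by
      intro x
      rw [((hD x).hasFDerivAt.pow (k + 2)).fderiv, norm_smul]
      simp [mul_assoc]
      left
      positivity
    have hcs := integral_mul_sq_le (h1.continuous.abs.pow (k + 1)) hcp1 hdφ.norm hcd
      (fun x => pow_nonneg (abs_nonneg _) _) (fun x => norm_nonneg _)
    have hih := ih φ h1 h2 h3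
    simp only [hfd, NNReal.coe_one, inv_one, Real.rpow_one, NNReal.coe_ofNat, Real.rpow_two,
      integral_const_mul, sq_abs] at h
    simp only [Pi.pow_apply, ← abs_pow, abs_sq] at hcs h
    set I := ∫ x, |φ x ^ (k + 1)| * ‖fderiv ℝ φ x‖
    set D := ∫ x, ‖fderiv ℝ φ x‖ ^ 2
    have hD0 : 0 ≤ D := integral_nonneg fun x => sq_nonneg _
    have hJ : 0 ≤ ∫ x, (φ x ^ (k + 2)) ^ 2 := integral_nonneg fun x => sq_nonneg _
    have h' := pow_le_pow_left₀ (by positivity) h 2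
    rw [← one_div, ← Real.sqrt_eq_rpow, Real.sq_sqrt hJ] at h'
    calc _ ≤ _ := h'
      _ = C ^ 2 * (k + 2) ^ 2 * I ^ 2 := by ring
      _ ≤ C ^ 2 * (k + 2) ^ 2 * ((B * D ^ (k + 1)) * D) := by
        gcongr
        exact hcs.trans (by gcongr)
      _ = _ := by ring

/-- Some exponent `r ≥ q` satisfies a Sobolev inequality on the slab: the critical exponent
`2N / (N - 2)` if `N ≥ 3`, and a large even integer if `N = 2`. -/
lemma higher_power {N : ℕ} (hN : 2 ≤ N) (h0 : 0 < N) {q : ℝ} (hq1 : 2 < q)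
    (hq2 : N = 2 ∨ q < 2 * N / (N - 2)) :
    ∃ r B : ℝ, q ≤ r ∧ 0 ≤ B ∧ ∀ φ : EuclideanSpace ℝ (Fin N) → ℝ, ContDiff ℝ 1 φ →
      HasCompactSupport φ → tsupport φ ⊆ slabInf N h0 →
      ∫ x, |φ x| ^ r ≤ B * (∫ x, ‖fderiv ℝ φ x‖ ^ 2) ^ (r / 2) := by
  rcases eq_or_lt_of_le hN with h | h
  · obtain ⟨k, hk⟩ := exists_nat_gt q
    obtain ⟨B, hB, hB'⟩ := planar_ladder h.symm h0 k
    refine ⟨((2 * (k + 1) : ℕ) : ℝ), B, ?_, hB, fun φ h1 h2 h3 => ?_⟩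
    · push_cast
      linarith
    · have h4 : ((2 * (k + 1) : ℕ) : ℝ) / 2 = ((k + 1 : ℕ) : ℝ) := by push_cast; ring
      rw [h4]
      simp only [Real.rpow_natCast, pow_mul, sq_abs]
      simpa only [← pow_mul, mul_comm] using hB' φ h1 h2 h3
  · have hN3 : (2 : ℝ) < N := by exact_mod_cast h
    have hq : q < 2 * N / (N - 2) := hq2.resolve_left h.ne'
    set r : ℝ := 2 * N / (N - 2) with hr
    have hr0 : 0 < r := by linarith
    have hri : r⁻¹ = (2 : ℝ)⁻¹ - (N : ℝ)⁻¹ := by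
      have : (N : ℝ) - 2 ≠ 0 := by linarith
      have : (N : ℝ) ≠ 0 := by linarith
      rw [hr]
      field_simp
    obtain ⟨C, hC, hS⟩ := sobolev_real (N := N) h0 (p := 2) (p' := ⟨r, hr0.le⟩) one_le_two
      (fun h => hr0.ne' (congrArg NNReal.toReal h)) hri
    refine ⟨r, C ^ r, hq.le, by positivity, fun φ h1 h2 h3 => ?_⟩
    have hI : 0 ≤ ∫ x, |φ x| ^ r := integral_nonneg fun x => by positivity
    have hD : 0 ≤ ∫ x, ‖fderiv ℝ φ x‖ ^ 2 := integral_nonneg fun x => by positivity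
    have h4 : (∫ x, |φ x| ^ r) ^ r⁻¹ ≤ C * (∫ x, ‖fderiv ℝ φ x‖ ^ (2 : ℝ)) ^ (2 : ℝ)⁻¹ :=
      hS φ h1 h2
    simp only [Real.rpow_two] at h4
    have h5 := Real.rpow_le_rpow (by positivity) h4 hr0.le
    rw [Real.rpow_inv_rpow hI hr0.ne', Real.mul_rpow hC (by positivity), ← Real.rpow_mul hD] at h5
    convert h5 using 3
    ring

lemma hasCompactSupport_abs_rpow {N : ℕ} {φ : EuclideanSpace ℝ (Fin N) → ℝ}
    (hc : HasCompactSupport φ) {s : ℝ} (hs : 0 < s) :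
    HasCompactSupport fun x => |φ x| ^ s :=
  hc.comp_left (g := fun t : ℝ => |t| ^ s) (by simp [hs.ne'])

lemma integral_abs_rpow_pos {N : ℕ} {φ : EuclideanSpace ℝ (Fin N) → ℝ}
    (hφ : Continuous φ) (hc : HasCompactSupport φ) (hne : φ ≠ 0) {s : ℝ} (hs : 0 < s) :
    0 < ∫ x, |φ x| ^ s := by
  obtain ⟨x, hx⟩ := Function.ne_iff.1 hne
  exact (hφ.abs.rpow_const fun _ => Or.inr hs.le).integral_pos_of_hasCompactSupport_nonneg_nonzero
    (hasCompactSupport_abs_rpow hc hs) (fun x => by positivity)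
    (x := x) (Real.rpow_pos_of_pos (abs_pos.2 hx) s).ne'

/-- Uniform lower bound on the Rayleigh quotients over the slab, interpolating `q` between `2` and
the exponent `r` of `higher_power`. -/
lemma sobolev_slab {N : ℕ} (hN : 2 ≤ N) (h0 : 0 < N) {q : ℝ} (hq1 : 2 < q)
    (hq2 : N = 2 ∨ q < 2 * N / (N - 2)) :
    ∃ c : ℝ, 0 < c ∧ ∀ φ : EuclideanSpace ℝ (Fin N) → ℝ, ContDiff ℝ 1 φ →
      HasCompactSupport φ → tsupport φ ⊆ slabInf N h0 → φ ≠ 0 →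
      c ≤ (∫ x, ‖fderiv ℝ φ x‖ ^ 2) / (∫ x, |φ x| ^ q) ^ (2 / q) := by
  obtain ⟨r, B, hqr, hB, hr⟩ := higher_power hN h0 hq1 hq2
  have hq0 : 0 < q := by linarith
  have hr0 : 0 < r := by linarith
  refine ⟨((4 + B) ^ (2 / q))⁻¹, by positivity, fun φ h1 h2 h3 hne => ?_⟩
  have hP := poincare_slab h0 h1 h2 h3
  have hR := hr φ h1 h2 h3
  set D := ∫ x, ‖fderiv ℝ φ x‖ ^ 2 with hD
  have hint : ∀ {s : ℝ}, 0 < s → Integrable fun x => |φ x| ^ s := fun hs =>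
    (h1.continuous.abs.rpow_const fun _ => Or.inr hs.le).integrable_of_hasCompactSupport
      (hasCompactSupport_abs_rpow h2 hs)
  have h2pos := integral_abs_rpow_pos h1.continuous h2 hne two_pos
  have hqpos := integral_abs_rpow_pos h1.continuous h2 hne hq0
  have hDpos : 0 < D := by
    simp only [Real.rpow_two, sq_abs] at h2pos
    linarith
  -- Integrated below: this is `t ^ q ≤ t ^ 2 + t ^ r` for `t = |φ x| / √D`, the value at `x` of
  -- the function normalized to have unit Dirichlet energy.
  have hpt : ∀ x, |φ x| ^ q ≤
      D ^ (q / 2) * D⁻¹ * |φ x| ^ (2 : ℝ) + D ^ (q / 2) * (D ^ (r / 2))⁻¹ * |φ x| ^ r := by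
    intro x
    set t : ℝ := |φ x| / √D with ht
    have hsD : 0 < √D := Real.sqrt_pos.2 hDpos
    have ht0 : 0 ≤ t := by positivity
    have hpow : ∀ s : ℝ, t ^ s = |φ x| ^ s * (D ^ (s / 2))⁻¹ := by
      intro s
      rw [ht, Real.div_rpow (abs_nonneg _) hsD.le, Real.sqrt_eq_rpow, ← Real.rpow_mul hDpos.le,
        div_eq_mul_inv]
      congr 3
      ring
    have hmain : t ^ q ≤ t ^ (2 : ℝ) + t ^ r := by
      rcases le_total t 1 with h | h
      · have := Real.rpow_le_rpow_of_exponent_ge' ht0 h two_pos.le hq1.le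
        have : 0 ≤ t ^ r := by positivity
        linarith
      · have := Real.rpow_le_rpow_of_exponent_le h hqr
        have : 0 ≤ t ^ (2 : ℝ) := by positivity
        linarith
    rw [hpow, hpow, hpow, ← div_eq_mul_inv, div_le_iff₀ (by positivity)] at hmain
    simp only [div_self (two_ne_zero' ℝ), Real.rpow_one] at hmain
    linarith
  have hI : ∫ x, |φ x| ^ q ≤ D ^ (q / 2) * (4 + B) := by
    have := integral_mono (hint hq0) (((hint two_pos).const_mul _).add ((hint hr0).const_mul _)) hpt
    simp only [Pi.add_apply] at this
    rw [integral_add ((hint two_pos).const_mul _) ((hint hr0).const_mul _), integral_const_mul,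
      integral_const_mul] at this
    simp only [Real.rpow_two, sq_abs] at this
    have hDr : 0 < D ^ (r / 2) := by positivity
    calc _ ≤ _ := this
      _ ≤ D ^ (q / 2) * D⁻¹ * (4 * D) + D ^ (q / 2) * (D ^ (r / 2))⁻¹ * (B * D ^ (r / 2)) := by
        gcongr
      _ = _ := by field_simp
  have hfin : (∫ x, |φ x| ^ q) ^ (2 / q) ≤ D * (4 + B) ^ (2 / q) := by
    calc _ ≤ (D ^ (q / 2) * (4 + B)) ^ (2 / q) := by gcongr
      _ = _ := by
        rw [Real.mul_rpow (by positivity) (by positivity), ← Real.rpow_mul hDpos.le,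
          show q / 2 * (2 / q) = 1 by field_simp, Real.rpow_one]
  rw [le_div_iff₀ (by positivity), inv_mul_le_iff₀ (by positivity), mul_comm]
  exact hfin

/-! ### Comparison principles for `lambda2q` -/

/-- The Rayleigh quotient of a function supported in `Ω` does not depend on `Ω`. -/
lemma rayleigh_eq {N : ℕ} {q : ℝ} (hq : 0 < q) {Ω : Set (EuclideanSpace ℝ (Fin N))}
    {φ : EuclideanSpace ℝ (Fin N) → ℝ} (hs : tsupport φ ⊆ Ω) :
    (∫ x in Ω, ‖fderiv ℝ φ x‖ ^ 2) / (∫ x in Ω, |φ x| ^ q) ^ (2 / q) =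
      (∫ x, ‖fderiv ℝ φ x‖ ^ 2) / (∫ x, |φ x| ^ q) ^ (2 / q) := by
  rw [setIntegral_eq_integral_of_forall_compl_eq_zero,
    setIntegral_eq_integral_of_forall_compl_eq_zero]
  · intro x hx
    simp [image_eq_zero_of_notMem_tsupport fun h => hx (hs h), hq.ne']
  · intro x hx
    have : x ∉ tsupport (fderiv ℝ φ) := fun h => hx (hs (tsupport_fderiv_subset ℝ h))
    simp [image_eq_zero_of_notMem_tsupport this]

lemma quotient_nonneg {N : ℕ} {q : ℝ} {Ω : Set (EuclideanSpace ℝ (Fin N))} :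
    ∀ c ∈ { c : ℝ | ∃ φ : EuclideanSpace ℝ (Fin N) → ℝ, ContDiff ℝ (⊤ : ℕ∞) φ ∧
      HasCompactSupport φ ∧ tsupport φ ⊆ Ω ∧ φ ≠ 0 ∧
      c = (∫ x in Ω, ‖fderiv ℝ φ x‖ ^ 2) / (∫ x in Ω, |φ x| ^ q) ^ (2 / q) }, 0 ≤ c := by
  rintro c ⟨φ, -, -, -, -, rfl⟩
  have h1 : 0 ≤ ∫ x in Ω, ‖fderiv ℝ φ x‖ ^ 2 := integral_nonneg fun x => by positivity
  have h2 : 0 ≤ ∫ x in Ω, |φ x| ^ q := integral_nonneg fun x => by positivity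
  positivity

lemma lambda2q_nonneg (N : ℕ) (q : ℝ) (Ω : Set (EuclideanSpace ℝ (Fin N))) :
    0 ≤ lambda2q N q Ω :=
  Real.sInf_nonneg quotient_nonneg

lemma lambda2q_le {N : ℕ} {q : ℝ} (hq : 0 < q) {Ω : Set (EuclideanSpace ℝ (Fin N))}
    {φ : EuclideanSpace ℝ (Fin N) → ℝ} (h1 : ContDiff ℝ (⊤ : ℕ∞) φ) (h2 : HasCompactSupport φ)
    (h3 : tsupport φ ⊆ Ω) (hne : φ ≠ 0) :
    lambda2q N q Ω ≤ (∫ x, ‖fderiv ℝ φ x‖ ^ 2) / (∫ x, |φ x| ^ q) ^ (2 / q) :=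
  csInf_le ⟨0, quotient_nonneg⟩ ⟨φ, h1, h2, h3, hne, (rayleigh_eq hq h3).symm⟩

/-- Openness and nonemptiness of `Ω` provide an admissible bump function, so that the infimum is not
the junk value `sInf ∅ = 0`. -/
lemma le_lambda2q {N : ℕ} {q : ℝ} (hq : 0 < q) {Ω : Set (EuclideanSpace ℝ (Fin N))}
    (ho : IsOpen Ω) (hne : Ω.Nonempty) {c : ℝ}
    (h : ∀ φ : EuclideanSpace ℝ (Fin N) → ℝ, ContDiff ℝ (⊤ : ℕ∞) φ → HasCompactSupport φ →
      tsupport φ ⊆ Ω → φ ≠ 0 →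
      c ≤ (∫ x, ‖fderiv ℝ φ x‖ ^ 2) / (∫ x, |φ x| ^ q) ^ (2 / q)) :
    c ≤ lambda2q N q Ω := by
  refine le_csInf ?_ ?_
  · obtain ⟨x, hx⟩ := hne
    obtain ⟨f, hf1, hf2, hf3, -, hf5⟩ := exists_contDiff_tsupport_subset (n := (⊤ : ℕ∞)) (ho.mem_nhds hx)
    exact ⟨_, f, hf3, hf2, hf1, fun h => by simp [h] at hf5, rfl⟩
  · rintro _ ⟨φ, h1, h2, h3, h4, rfl⟩
    rw [rayleigh_eq hq h3]
    exact h φ h1 h2 h3 h4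

lemma lambda2q_anti {N : ℕ} {q : ℝ} (hq : 0 < q) {Ω Ω' : Set (EuclideanSpace ℝ (Fin N))}
    (ho : IsOpen Ω) (hne : Ω.Nonempty) (hs : Ω ⊆ Ω') : lambda2q N q Ω' ≤ lambda2q N q Ω :=
  le_lambda2q hq ho hne fun _ h1 h2 h3 h4 => lambda2q_le hq h1 h2 (h3.trans hs) h4

/-! ### Geometry of the boxes -/

lemma slab_eq_preimage {N : ℕ} (h0 : 0 < N) (L : ℝ) :
    slab N h0 L = WithLp.ofLp ⁻¹' (Set.univ.pi fun i : Fin N =>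
      Set.Ioo (if (i : ℕ) < N - 1 then -(L / 2) else 0) (if (i : ℕ) < N - 1 then L / 2 else 1)) := by
  ext x
  simp only [slab, Set.mem_ofPred_eq, Set.mem_preimage, Set.mem_pi, Set.mem_univ, true_implies,
    abs_lt]
  constructor
  · rintro ⟨h1, h2⟩ i
    by_cases hi : (i : ℕ) < N - 1
    · simpa [hi] using h1 i hi
    · have : i = ⟨N - 1, Nat.sub_lt h0 one_pos⟩ := Fin.ext (by have := i.2; simp only; omega)
      subst this
      simpa using h2
  · intro h
    refine ⟨fun i hi => by simpa [hi] using h i, ?_⟩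
    simpa using h ⟨N - 1, Nat.sub_lt h0 one_pos⟩

lemma isOpen_slab {N : ℕ} (h0 : 0 < N) (L : ℝ) : IsOpen (slab N h0 L) := by
  rw [slab_eq_preimage]
  exact (isOpen_set_pi Set.finite_univ fun _ _ => isOpen_Ioo).preimage (PiLp.continuous_ofLp 2 _)

lemma convex_slab {N : ℕ} (h0 : 0 < N) (L : ℝ) : Convex ℝ (slab N h0 L) := by
  rw [slab_eq_preimage]
  exact (convex_pi fun _ _ => convex_Ioo _ _).linear_preimage
    (WithLp.linearEquiv 2 ℝ (Fin N → ℝ)).toLinearMap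

lemma isBounded_slab {N : ℕ} (h0 : 0 < N) (L : ℝ) : Bornology.IsBounded (slab N h0 L) := by
  rw [slab_eq_preimage]
  refine ((isCompact_univ_pi fun i : Fin N => isCompact_Icc
    (a := if (i : ℕ) < N - 1 then -(L / 2) else 0)
    (b := if (i : ℕ) < N - 1 then L / 2 else 1)).image (PiLp.continuous_toLp 2 (fun _ : Fin N => ℝ))).isBounded.subset ?_
  intro x hx
  exact ⟨WithLp.ofLp x, Set.pi_mono (fun i _ => Set.Ioo_subset_Icc_self) hx, rfl⟩

lemma slab_mono {N : ℕ} (h0 : 0 < N) {L L' : ℝ} (h : L ≤ L') : slab N h0 L ⊆ slab N h0 L' :=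
  fun _ hx => ⟨fun i hi => (hx.1 i hi).trans_le (by linarith), hx.2⟩

lemma slab_subset_slabInf {N : ℕ} (h0 : 0 < N) (L : ℝ) : slab N h0 L ⊆ slabInf N h0 :=
  fun _ hx => hx.2

lemma slab_nonempty {N : ℕ} (h0 : 0 < N) {L : ℝ} (hL : 0 < L) : (slab N h0 L).Nonempty := by
  refine ⟨EuclideanSpace.single ⟨N - 1, Nat.sub_lt h0 one_pos⟩ (1 / 2), fun i hi => ?_, ?_⟩
  · have : i ≠ ⟨N - 1, Nat.sub_lt h0 one_pos⟩ := fun h => by simp [h] at hi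
    simp [this, hL]
  · norm_num

lemma isOpen_slabInf {N : ℕ} (h0 : 0 < N) : IsOpen (slabInf N h0) := by
  have : Continuous fun x : EuclideanSpace ℝ (Fin N) => x ⟨N - 1, Nat.sub_lt h0 one_pos⟩ := by
    fun_prop
  exact (isOpen_lt continuous_const this).inter (isOpen_lt this continuous_const)

/-- A ball of radius greater than `1` contains, besides its centre `x`, the point `x - e_N`, and the
last coordinates of these two points cannot both lie in `(0,1)`. -/
lemma inradius_slab {N : ℕ} (h0 : 0 < N) (L : ℝ) :
    0 ≤ inradius (slab N h0 L) ∧ inradius (slab N h0 L) ≤ 1 := by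
  have hub : ∀ r ∈ {r : ℝ | ∃ x, Metric.ball x r ⊆ slab N h0 L}, r ≤ 1 := by
    rintro r ⟨x, hx⟩
    by_contra! hr
    set j : Fin N := ⟨N - 1, Nat.sub_lt h0 one_pos⟩
    have h1 : x ∈ slab N h0 L := hx (Metric.mem_ball_self (by linarith))
    have h2 : x - EuclideanSpace.single j 1 ∈ slab N h0 L := hx (by simpa using hr)
    have h3 : x j < 1 := h1.2.2
    have h4 : 0 < (x - EuclideanSpace.single j (1 : ℝ)) j := h2.2.1
    simp at h4
    linarith
  have hmem : (0 : ℝ) ∈ {r : ℝ | ∃ x, Metric.ball x r ⊆ slab N h0 L} := ⟨0, by simp⟩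
  exact ⟨le_csSup ⟨1, hub⟩ hmem, csSup_le ⟨0, hmem⟩ hub⟩

/-- The volume is `L ^ (N - 1)`; the bound by `L` is all that is needed. -/
lemma le_volume_slab {N : ℕ} (hN : 2 ≤ N) (h0 : 0 < N) {L : ℝ} (hL : 1 ≤ L) :
    L ≤ (volume (slab N h0 L)).toReal := by
  rw [slab_eq_preimage, (PiLp.volume_preserving_ofLp (Fin N)).measure_preimage
    (MeasurableSet.univ_pi fun _ => measurableSet_Ioo).nullMeasurableSet, Real.volume_pi_Ioo_toReal]
  · obtain ⟨n, rfl⟩ : ∃ n, N = n + 2 := ⟨N - 2, by omega⟩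
    rw [Fin.prod_univ_castSucc]
    have hx : ∀ x : Fin (n + 1), (x : ℕ) ≤ n := fun x => Nat.lt_succ_iff.1 x.2
    simp [hx]
    exact le_self_pow₀ hL n.succ_ne_zero
  · intro i
    dsimp only
    split_ifs <;> linarith

/-! ### The limit of long boxes -/

/-- Let `2 < q < 2*` and `Ω_L = (-L/2, L/2)^{N-1} × (0,1)`. Then
`λ_{2,q}(Ω_L)` is non-increasing in `L`, `lim_{L→∞} λ_{2,q}(Ω_L) = λ_{2,q}(ℝ^{N-1} × (0,1)) > 0`,
and consequently the infimum over nonempty open bounded convex sets `Ω` of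
`R_Ω² λ_{2,q}(Ω) |Ω|^((2-q)/q)` equals `0`: no Hersch–Protter-type lower bound holds for
`2 < q < 2*`. -/
theorem stmt_19 (N : ℕ) (hN : 2 ≤ N) (q : ℝ) (hq1 : 2 < q)
    (hq2 : N = 2 ∨ q < 2 * N / (N - 2)) :
    AntitoneOn (fun L : ℝ => lambda2q N q (slab N (by omega) L)) (Set.Ioi 0) ∧
    Tendsto (fun L : ℝ => lambda2q N q (slab N (by omega) L)) atTop
      (nhds (lambda2q N q (slabInf N (by omega)))) ∧
    0 < lambda2q N q (slabInf N (by omega)) ∧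
    sInf { c : ℝ | ∃ Ω : Set (EuclideanSpace ℝ (Fin N)), IsOpen Ω ∧
        Bornology.IsBounded Ω ∧ Convex ℝ Ω ∧ Ω.Nonempty ∧
        c = inradius Ω ^ 2 * lambda2q N q Ω * (volume Ω).toReal ^ ((2 - q) / q) } = 0 := by
  have h0 : 0 < N := by omega
  have hq : 0 < q := by linarith
  have hne : (slabInf N h0).Nonempty := (slab_nonempty h0 one_pos).mono (slab_subset_slabInf h0 1)
  have hpos : ∀ L : ℝ, 0 < L → lambda2q N q (slabInf N h0) ≤ lambda2q N q (slab N h0 L) :=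
    fun L hL => lambda2q_anti hq (isOpen_slab h0 L) (slab_nonempty h0 hL)
      (slab_subset_slabInf h0 L)
  have hanti : AntitoneOn (fun L : ℝ => lambda2q N q (slab N h0 L)) (Set.Ioi 0) :=
    fun L hL L' _ h => lambda2q_anti hq (isOpen_slab h0 L) (slab_nonempty h0 hL) (slab_mono h0 h)
  refine ⟨hanti, ?_, ?_, ?_⟩
  · refine tendsto_order.2 ⟨fun a ha => ?_, fun b hb => ?_⟩
    · filter_upwards [eventually_gt_atTop 0] with L hL using ha.trans_le (hpos L hL)
    · by_contra hcon
      -- If the values stayed `≥ b` along a sequence of lengths, `b` would bound every Rayleigh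
      -- quotient on the infinite slab, since each test function lives in some long box.
      refine absurd hb (not_lt.2 (le_lambda2q hq (isOpen_slabInf h0) hne fun φ h1 h2 h3 h4 => ?_))
      obtain ⟨M, hM⟩ := h2.isCompact.isBounded.exists_norm_le
      obtain ⟨L, hL, hbL⟩ := (frequently_atTop.1 (not_eventually.1 hcon)) (2 * M + 1)
      refine (not_lt.1 hbL).trans (lambda2q_le hq h1 h2 (fun x hx => ⟨fun i _ => ?_, h3 hx⟩) h4)
      have h5 : |x i| ≤ ‖x‖ := PiLp.norm_apply_le x i
      have := hM x hx
      linarith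
  · obtain ⟨c, hc, h⟩ := sobolev_slab hN h0 hq1 hq2
    exact hc.trans_le (le_lambda2q hq (isOpen_slabInf h0) hne fun φ h1 h2 h3 h4 =>
      h φ (h1.of_le (by exact_mod_cast le_top)) h2 h3 h4)
  · have hnn : ∀ c ∈ { c : ℝ | ∃ Ω : Set (EuclideanSpace ℝ (Fin N)), IsOpen Ω ∧
        Bornology.IsBounded Ω ∧ Convex ℝ Ω ∧ Ω.Nonempty ∧
        c = inradius Ω ^ 2 * lambda2q N q Ω * (volume Ω).toReal ^ ((2 - q) / q) }, 0 ≤ c := by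
      rintro c ⟨Ω, -, -, -, -, rfl⟩
      have := lambda2q_nonneg N q Ω
      positivity
    refine le_antisymm ?_ (Real.sInf_nonneg hnn)
    have hexp : 0 < (q - 2) / q := div_pos (by linarith) hq
    have hlim : Tendsto (fun L : ℝ => lambda2q N q (slab N h0 1) * L ^ (-((q - 2) / q))) atTop
        (nhds 0) := by
      simpa using (tendsto_rpow_neg_atTop hexp).const_mul (lambda2q N q (slab N h0 1))
    refine ge_of_tendsto hlim ?_
    filter_upwards [eventually_ge_atTop 1] with L hL
    have hL0 : 0 < L := by linarith
    refine (csInf_le ⟨0, hnn⟩ ⟨slab N h0 L, isOpen_slab h0 L, isBounded_slab h0 L,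
      convex_slab h0 L, slab_nonempty h0 hL0, rfl⟩).trans ?_
    have hvol : L ≤ (volume (slab N h0 L)).toReal := le_volume_slab hN h0 hL
    obtain ⟨hi0, hi1⟩ := inradius_slab h0 L
    have hl := lambda2q_nonneg N q (slab N h0 L)
    have hl1 : lambda2q N q (slab N h0 L) ≤ lambda2q N q (slab N h0 1) :=
      hanti (Set.mem_Ioi.2 one_pos) (Set.mem_Ioi.2 hL0) hL
    have hv : (volume (slab N h0 L)).toReal ^ ((2 - q) / q) ≤ L ^ (-((q - 2) / q)) := by
      rw [show (2 - q) / q = -((q - 2) / q) by ring]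
      exact Real.rpow_le_rpow_of_nonpos hL0 hvol (by linarith)
    have hsq : inradius (slab N h0 L) ^ 2 ≤ 1 := pow_le_one₀ hi0 hi1
    have hl2 := lambda2q_nonneg N q (slab N h0 1)
    calc _ ≤ 1 * lambda2q N q (slab N h0 1) * L ^ (-((q - 2) / q)) := by
          gcongr
      _ = _ := by rw [one_mul]
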